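/- arXiv:0903.1877 — 3 statements merged into one kernel-verified Lean document; each statement's English description precedes it below -/
import Mathlib

section
/- Let m ≥ 2 be a natural number and let A_m : ℕ → ℕ → ℕ be defined by A_m(i,0) = 1 if i = 0 and 0 otherwise; A_m(0,n+1) = m·A_m(1,n); and A_m(i+1,n+1) = A_m(i,n) + (m−1)·A_m(i+2,n). Let f ∈ ℚ[[X]] be the power series whose n-th coefficient is A_m(0,n). Then f satisfies the algebraic equation (1 − m²X²)·f² + (m−2)·f − (m−1) = 0 in ℚ[[X]]. -/
open PowerSeries

/-!
Let `F i` be the generating function of the row `A i`. Then `F 0 = 1 + a * X * F 1` and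
`F (i + 1) = X * (F i + c * F (i + 2))`. Because of the factor `X`, a solution of the second
equation is determined by its value at `i = 0`. For fixed `j`, both `i ↦ F i * F j` and
`i ↦ F 0 * F (i + j)` are solutions, with the same value at `i = 0`, so they coincide. Hence
`F 1 ^ 2 = F 0 * F 2`, and eliminating `F 1` and `F 2` leaves a quadratic equation for `F 0`.
-/

section ThreeTermRecurrence

variable {R : Type*}

theorem eq_of_three_term_recurrence [Semiring R] {c : R⟦X⟧} {F G : ℕ → R⟦X⟧}
    (hF : ∀ i, F (i + 1) = X * (F i + c * F (i + 2)))
    (hG : ∀ i, G (i + 1) = X * (G i + c * G (i + 2))) (h_zero : F 0 = G 0) : F = G := by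
  suffices h_coeff : ∀ n i, coeff n (F i) = coeff n (G i) from
    funext fun i => PowerSeries.ext fun n => h_coeff n i
  intro n
  induction n using Nat.strong_induction_on with
  | _ n ih =>
    rintro (_ | i)
    · rw [h_zero]
    · rw [hF, hG]
      cases n with
      | zero => simp only [coeff_zero_X_mul]
      | succ n =>
        have h_mul : coeff n (c * F (i + 2)) = coeff n (c * G (i + 2)) := by
          simp only [coeff_mul]
          refine Finset.sum_congr rfl fun p hp => ?_
          rw [ih p.2 (Finset.Nat.antidiagonal.snd_lt hp)]
        rw [coeff_succ_X_mul, coeff_succ_X_mul, map_add, map_add, ih n n.lt_succ_self, h_mul]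

theorem mul_eq_mul_add_of_three_term_recurrence [CommSemiring R] {c : R⟦X⟧} {F : ℕ → R⟦X⟧}
    (hF : ∀ i, F (i + 1) = X * (F i + c * F (i + 2))) (i j : ℕ) :
    F i * F j = F 0 * F (i + j) := by
  have h_left (k : ℕ) : F (k + 1) * F j = X * (F k * F j + c * (F (k + 2) * F j)) := by
    rw [hF]
    ring
  have h_right (k : ℕ) :
      F 0 * F (k + 1 + j) = X * (F 0 * F (k + j) + c * (F 0 * F (k + 2 + j))) := by
    rw [add_right_comm k 1 j, add_right_comm k 2 j, hF]
    ring
  exact congrFun (eq_of_three_term_recurrence (F := fun i => F i * F j)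
    (G := fun i => F 0 * F (i + j)) h_left h_right (by rw [zero_add])) i

theorem quadratic_of_three_term_recurrence [CommRing R] {a c : R⟦X⟧} {F : ℕ → R⟦X⟧}
    (h_zero : F 0 = 1 + X * (a * F 1)) (h_succ : ∀ i, F (i + 1) = X * (F i + c * F (i + 2))) :
    (a - c - a ^ 2 * X ^ 2) * F 0 ^ 2 + (2 * c - a) * F 0 - c = 0 := by
  have h_sq : F 1 * F 1 = F 0 * F 2 := mul_eq_mul_add_of_three_term_recurrence h_succ 1 1
  have h_one : F 1 = X * (F 0 + c * F 2) := h_succ 0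
  have h_sub : F 0 - 1 = X * (a * F 1) := sub_eq_of_eq_add' h_zero
  have h_elim : a * F 0 * (F 0 - 1) = a ^ 2 * X ^ 2 * F 0 ^ 2 + c * (F 0 - 1) ^ 2 :=
    calc a * F 0 * (F 0 - 1)
      _ = a ^ 2 * X * F 0 * F 1 := by rw [h_sub]; ring
      _ = a ^ 2 * X * F 0 * (X * (F 0 + c * F 2)) := by rw [← h_one]
      _ = a ^ 2 * X ^ 2 * F 0 ^ 2 + c * (a ^ 2 * X ^ 2 * (F 0 * F 2)) := by ring
      _ = a ^ 2 * X ^ 2 * F 0 ^ 2 + c * (F 0 - 1) ^ 2 := by rw [← h_sq, h_sub]; ring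
  linear_combination h_elim

end ThreeTermRecurrence

theorem mk_eq_C_add_X_mul_mk_succ {R : Type*} [Semiring R] (u : ℕ → R) :
    mk u = C (u 0) + X * mk fun n => u (n + 1) := by
  simpa [add_comm] using eq_X_mul_shift_add_const (mk u)

theorem generating_function_algebraic_equation_general {R : Type*} [CommRing R] (a c : R)
    (A : ℕ → ℕ → R) (hA_init : ∀ i, A i 0 = if i = 0 then 1 else 0)
    (hA_zero : ∀ n, A 0 (n + 1) = a * A 1 n)
    (hA_succ : ∀ i n, A (i + 1) (n + 1) = A i n + c * A (i + 2) n) :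
    (C a - C c - C a ^ 2 * X ^ 2) * mk (A 0) ^ 2 + (2 * C c - C a) * mk (A 0) - C c = 0 := by
  refine quadratic_of_three_term_recurrence (F := fun i => mk (A i)) ?_ fun i => ?_
  · have h_shift : (mk fun n => A 0 (n + 1)) = C a * mk (A 1) := by
      ext n
      simp only [coeff_mk, coeff_C_mul, hA_zero]
    rw [mk_eq_C_add_X_mul_mk_succ, h_shift, hA_init, if_pos rfl, map_one]
  · have h_shift : (mk fun n => A (i + 1) (n + 1)) = mk (A i) + C c * mk (A (i + 2)) := by
      ext n
      simp only [coeff_mk, map_add, coeff_C_mul, hA_succ]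
    rw [mk_eq_C_add_X_mul_mk_succ, h_shift, hA_init, if_neg i.succ_ne_zero, map_zero, zero_add]

theorem generating_function_algebraic_equation (m : ℕ) (hm : 2 ≤ m) (A : ℕ → ℕ → ℕ)
    (hA_init : ∀ i, A i 0 = if i = 0 then 1 else 0)
    (hA_zero : ∀ n, A 0 (n + 1) = m * A 1 n)
    (hA_succ : ∀ i n, A (i + 1) (n + 1) = A i n + (m - 1) * A (i + 2) n)
    (f : PowerSeries ℚ) (hf : f = PowerSeries.mk fun n => (A 0 n : ℚ)) :
    (1 - (m : PowerSeries ℚ) ^ 2 * X ^ 2) * f ^ 2 + ((m : PowerSeries ℚ) - 2) * f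
      - ((m : PowerSeries ℚ) - 1) = 0 := by
  have h_quadratic := generating_function_algebraic_equation_general (m : ℚ) ((m - 1 : ℕ) : ℚ)
    (fun i n => (A i n : ℚ)) (by simp [hA_init]) (by simp [hA_zero]) (by simp [hA_succ])
  rw [← hf, map_natCast, map_natCast, Nat.cast_pred (by lia)] at h_quadratic
  linear_combination h_quadratic
end

section
/- Let m ≥ 2 be a natural number and let A_m : ℕ → ℕ → ℕ be defined by A_m(i,0) = 1 if i = 0 and 0 otherwise; A_m(0,n+1) = m·A_m(1,n); and A_m(i+1,n+1) = A_m(i,n) + (m−1)·A_m(i+2,n). For each i let F_i ∈ ℚ[[X]] be the power series whose n-th coefficient is A_m(i,n). If a ∈ ℚ[[X]] satisfies a = 1 + (m−1)·X²·a², then for every i ≥ 0, F_i = F_0 · (X·a)^i. -/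
open PowerSeries

/-!
The recurrence for `A` says that `F (i + 1) = X * (F i + c * F (i + 2))` with `c = m - 1`, and the
equation for `a` says that the geometric sequence `F 0 * (X * a) ^ i` satisfies it too. A solution
is determined by its zeroth term alone: although the recurrence looks forward to `F (i + 2)`, the
factor `X` makes each coefficient of `F (i + 1)` depend only on coefficients of lower index.
-/

section Recurrence

variable {R : Type*}

lemma coeff_mul_congr_right_of_le [Semiring R] (b : R⟦X⟧) {f g : R⟦X⟧} {n : ℕ}
    (hfg : ∀ k ≤ n, coeff k f = coeff k g) : coeff n (b * f) = coeff n (b * g) := by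
  rw [coeff_mul, coeff_mul]
  exact Finset.sum_congr rfl fun p hp ↦ by
    rw [hfg p.2 (Finset.HasAntidiagonal.antidiagonal.snd_le hp)]

lemma eq_of_succ_eq_X_mul_add [Semiring R] {b : R⟦X⟧} {F G : ℕ → R⟦X⟧}
    (hF : ∀ i, F (i + 1) = X * (F i + b * F (i + 2)))
    (hG : ∀ i, G (i + 1) = X * (G i + b * G (i + 2))) (h_zero : F 0 = G 0) : F = G := by
  suffices h_coeff : ∀ n i, coeff n (F i) = coeff n (G i) from
    funext fun i ↦ PowerSeries.ext fun n ↦ h_coeff n i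
  intro n
  induction n using Nat.strong_induction_on with
  | _ n ih =>
    rintro (_ | i)
    · rw [h_zero]
    · rw [hF, hG]
      cases n with
      | zero => simp only [coeff_zero_X_mul]
      | succ n =>
        have h_tail : coeff n (b * F (i + 2)) = coeff n (b * G (i + 2)) :=
          coeff_mul_congr_right_of_le b fun k hk ↦ ih k (Nat.lt_succ_of_le hk) (i + 2)
        rw [coeff_succ_X_mul, coeff_succ_X_mul, map_add, map_add, ih n n.lt_succ_self i, h_tail]

lemma mul_X_mul_pow_succ_eq_X_mul_add [CommSemiring R] {a b : R⟦X⟧}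
    (ha : a = 1 + b * X ^ 2 * a ^ 2) (f : R⟦X⟧) (i : ℕ) :
    f * (X * a) ^ (i + 1) = X * (f * (X * a) ^ i + b * (f * (X * a) ^ (i + 2))) :=
  calc f * (X * a) ^ (i + 1)
      = X * (f * (X * a) ^ i) * a := by ring
    _ = X * (f * (X * a) ^ i) * (1 + b * X ^ 2 * a ^ 2) := by rw [← ha]
    _ = X * (f * (X * a) ^ i + b * (f * (X * a) ^ (i + 2))) := by ring

lemma eq_mul_X_mul_pow_of_succ_eq_X_mul_add [CommSemiring R] {a b : R⟦X⟧} {F : ℕ → R⟦X⟧}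
    (hF : ∀ i, F (i + 1) = X * (F i + b * F (i + 2))) (ha : a = 1 + b * X ^ 2 * a ^ 2) (i : ℕ) :
    F i = F 0 * (X * a) ^ i :=
  congrFun (eq_of_succ_eq_X_mul_add (G := fun i ↦ F 0 * (X * a) ^ i) hF
    (mul_X_mul_pow_succ_eq_X_mul_add ha (F 0)) (by simp)) i

lemma mk_succ_eq_X_mul_add [Semiring R] {c : R} {A : ℕ → ℕ → R}
    (hA_init : ∀ i, A (i + 1) 0 = 0)
    (hA_succ : ∀ i n, A (i + 1) (n + 1) = A i n + c * A (i + 2) n) (i : ℕ) :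
    mk (A (i + 1)) = X * (mk (A i) + C c * mk (A (i + 2))) := by
  ext n
  cases n with
  | zero => rw [coeff_mk, coeff_zero_X_mul, hA_init]
  | succ n => rw [coeff_succ_X_mul, map_add, coeff_C_mul, coeff_mk, coeff_mk, coeff_mk, hA_succ]

theorem generating_function_geometric_factorization_general [CommSemiring R] {c : R}
    {A : ℕ → ℕ → R} (hA_init : ∀ i, A (i + 1) 0 = 0)
    (hA_succ : ∀ i n, A (i + 1) (n + 1) = A i n + c * A (i + 2) n)
    {a : R⟦X⟧} (ha : a = 1 + C c * X ^ 2 * a ^ 2) (i : ℕ) :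
    mk (A i) = mk (A 0) * (X * a) ^ i :=
  eq_mul_X_mul_pow_of_succ_eq_X_mul_add (F := fun i ↦ mk (A i))
    (mk_succ_eq_X_mul_add hA_init hA_succ) ha i

end Recurrence

theorem generating_function_geometric_factorization (m : ℕ) (hm : 2 ≤ m) (A : ℕ → ℕ → ℕ)
    (hA_init : ∀ i, A i 0 = if i = 0 then 1 else 0)
    (hA_zero : ∀ n, A 0 (n + 1) = m * A 1 n)
    (hA_succ : ∀ i n, A (i + 1) (n + 1) = A i n + (m - 1) * A (i + 2) n)
    (F : ℕ → PowerSeries ℚ) (hF : ∀ i, F i = PowerSeries.mk fun n => (A i n : ℚ))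
    (a : PowerSeries ℚ)
    (ha : a = 1 + ((m : PowerSeries ℚ) - 1) * X ^ 2 * a ^ 2) :
    ∀ i : ℕ, F i = F 0 * (X * a) ^ i := by
  have h_weight : C ((m - 1 : ℕ) : ℚ) = (m : ℚ⟦X⟧) - 1 := by
    rw [map_natCast, Nat.cast_pred (by lia)]
  intro i
  rw [hF, hF]
  exact generating_function_geometric_factorization_general (A := fun i n ↦ (A i n : ℚ))
    (fun i ↦ by simp [hA_init]) (fun i n ↦ mod_cast hA_succ i n) (h_weight ▸ ha) i
end

section
/- Let R be a commutative ring and c₁, c₂, c₃ ∈ R. Define A : ℕ → ℕ → R by A(i,0) = 1 if i = 0 and 0 otherwise; A(0,n+1) = c₃·A(1,n); and A(i+1,n+1) = c₁·A(i,n) + c₂·A(i+2,n). For a list p of steps in {U, D} of length n, say p is admissible ending at i if every partial sum of the values (+1 for U, −1 for D) is nonnegative and the total sum is i. Define poids(p) = c₁^{(number of U steps)} · ∏ over D steps (c₃ if that D step ends at height 0, else c₂). Then for all i and n, A(i,n) equals the sum of poids(p) over all admissible lists p of length n ending at i. -/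
/-- The value of a step: `true` is an up-step U (value `+1`),
`false` is a down-step D (value `-1`). -/
def stepVal (b : Bool) : ℤ := if b then 1 else -1

/-- The height of the lattice path `l` after its first `k` steps. -/
def heightAfter (l : List Bool) (k : ℕ) : ℤ := ((l.take k).map stepVal).sum

/-- A path is admissible ending at `i` if every partial sum of the step values is
nonnegative and the total sum is `i`. -/
def AdmissibleEndingAt (l : List Bool) (i : ℕ) : Prop :=
  (∀ k, 0 ≤ heightAfter l k) ∧ heightAfter l l.length = (i : ℤ)

/-- The "poids" of a path: `c₁` for each up-step, and for each down-step `c₃` if it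
lands on the x-axis and `c₂` otherwise. -/
def poids {R : Type*} [CommRing R] (c₁ c₂ c₃ : R) (l : List Bool) : R :=
  c₁ ^ l.count true *
    ∏ k ∈ Finset.range l.length,
      if l.getD k true = false then (if heightAfter l (k + 1) = 0 then c₃ else c₂) else 1

/-!
Split a path at its last step. A path ending at `0` must finish with a down-step from height `1`,
weighted `c₃`; a path ending at `i + 1` finishes either with an up-step from `i`, weighted `c₁`, or
with a down-step from `i + 2`, weighted `c₂`. These last-step identities are the recurrence for `A`.
-/

theorem sum_ofFn_succ {α M : Type*} [Fintype α] [AddCommMonoid M] (n : ℕ) (f : List α → M) :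
    ∑ p : Fin (n + 1) → α, f (List.ofFn p) =
      ∑ a, ∑ p : Fin n → α, f (List.ofFn p ++ [a]) := by
  have hsnoc (a : α) (p : Fin n → α) :
      List.ofFn (Fin.snoc (α := fun _ => α) p a) = List.ofFn p ++ [a] := by
    rw [List.ofFn_succ', List.concat_eq_append]
    simp only [Fin.snoc_castSucc, Fin.snoc_last]
  rw [← (Fin.snocEquiv fun _ => α).sum_comp, Fintype.sum_prod_type]
  simp only [Fin.snocEquiv, Equiv.coe_fn_mk, hsnoc]

theorem heightAfter_of_length_le {l : List Bool} {k : ℕ} (hk : l.length ≤ k) :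
    heightAfter l k = heightAfter l l.length := by
  simp [heightAfter, List.take_of_length_le hk]

theorem heightAfter_append_of_le_length {l : List Bool} {k : ℕ} (hk : k ≤ l.length)
    (l' : List Bool) : heightAfter (l ++ l') k = heightAfter l k := by
  simp [heightAfter, List.take_append_of_le_length hk]

theorem heightAfter_concat_length_succ (l : List Bool) (b : Bool) :
    heightAfter (l ++ [b]) (l.length + 1) = heightAfter l l.length + stepVal b := by
  simp [heightAfter]

theorem admissibleEndingAt_nil_iff {i : ℕ} : AdmissibleEndingAt [] i ↔ i = 0 := by
  simp [AdmissibleEndingAt, heightAfter, eq_comm]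

theorem heightAfter_nonneg_of_append {l l' : List Bool}
    (h : ∀ k, 0 ≤ heightAfter (l ++ l') k) (k : ℕ) : 0 ≤ heightAfter l k := by
  rcases le_total k l.length with hk | hk
  · simpa only [heightAfter_append_of_le_length hk] using h k
  · simpa only [heightAfter_of_length_le hk, heightAfter_append_of_le_length le_rfl]
      using h l.length

theorem admissibleEndingAt_concat_iff {l : List Bool} {b : Bool} {j : ℕ} :
    AdmissibleEndingAt (l ++ [b]) j ↔
      ∃ i : ℕ, AdmissibleEndingAt l i ∧ (i : ℤ) + stepVal b = j := by
  have hlen : (l ++ [b]).length = l.length + 1 := by simp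
  constructor
  · rintro ⟨hnonneg, hend⟩
    have hl := heightAfter_nonneg_of_append hnonneg
    obtain ⟨i, hi⟩ := Int.eq_ofNat_of_zero_le (hl l.length)
    refine ⟨i, ⟨hl, hi⟩, ?_⟩
    rw [← hi, ← heightAfter_concat_length_succ, ← hlen, hend]
  · rintro ⟨i, ⟨hnonneg, hi⟩, hij⟩
    have hend : heightAfter (l ++ [b]) (l ++ [b]).length = j := by
      rw [hlen, heightAfter_concat_length_succ, hi, hij]
    refine ⟨fun k => ?_, hend⟩
    rcases Nat.lt_or_ge l.length k with hk | hk
    · rw [heightAfter_of_length_le (hlen.trans_le hk), hend]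
      exact Int.natCast_nonneg j
    · rw [heightAfter_append_of_le_length hk]
      exact hnonneg k

theorem not_admissibleEndingAt_concat_true_zero (l : List Bool) :
    ¬ AdmissibleEndingAt (l ++ [true]) 0 := by
  rw [admissibleEndingAt_concat_iff]
  rintro ⟨i, -, hi⟩
  simp only [stepVal, if_true] at hi
  lia

theorem admissibleEndingAt_concat_true_succ_iff {l : List Bool} {i : ℕ} :
    AdmissibleEndingAt (l ++ [true]) (i + 1) ↔ AdmissibleEndingAt l i := by
  simp [admissibleEndingAt_concat_iff, stepVal]

theorem admissibleEndingAt_concat_false_iff {l : List Bool} {i : ℕ} :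
    AdmissibleEndingAt (l ++ [false]) i ↔ AdmissibleEndingAt l (i + 1) := by
  have hstep (j : ℕ) : (j : ℤ) + stepVal false = i ↔ j = i + 1 := by
    simp only [stepVal, Bool.false_eq_true, if_false]
    lia
  simp [admissibleEndingAt_concat_iff, hstep]

section Weight

variable {R : Type*} [CommRing R] (c₁ c₂ c₃ : R)

theorem poids_nil : poids c₁ c₂ c₃ [] = 1 := by
  simp [poids]

theorem poids_concat (l : List Bool) (b : Bool) :
    poids c₁ c₂ c₃ (l ++ [b]) =
      (if b then c₁ else if heightAfter l l.length = 1 then c₃ else c₂) * poids c₁ c₂ c₃ l := by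
  have hprefix : ∀ k ∈ Finset.range l.length,
      (if (l ++ [b]).getD k true = false then
        (if heightAfter (l ++ [b]) (k + 1) = 0 then c₃ else c₂) else 1) =
      if l.getD k true = false then (if heightAfter l (k + 1) = 0 then c₃ else c₂) else 1 := by
    intro k hk
    rw [Finset.mem_range] at hk
    rw [List.getD_append _ _ _ _ hk, heightAfter_append_of_le_length hk]
  have hlast : (l ++ [b]).getD l.length true = b := by simp
  rw [poids, poids, List.length_append, List.length_singleton, Finset.prod_range_succ,
    Finset.prod_congr rfl hprefix, hlast, heightAfter_concat_length_succ, List.count_append]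
  cases b
  · simp only [stepVal, Bool.false_eq_true, if_false, if_true, ← sub_eq_add_neg, sub_eq_zero]
    simp [mul_comm, mul_left_comm]
  · simp [pow_succ', mul_assoc]

open scoped Classical in
/-- The contribution of the path `l` to the weighted count of admissible paths ending at `i`:
its weight if it is such a path, and `0` otherwise. -/
noncomputable def admissiblePoids (i : ℕ) (l : List Bool) : R :=
  if AdmissibleEndingAt l i then poids c₁ c₂ c₃ l else 0

theorem admissiblePoids_nil (i : ℕ) :
    admissiblePoids c₁ c₂ c₃ i [] = if i = 0 then 1 else 0 := by
  simp [admissiblePoids, admissibleEndingAt_nil_iff, poids_nil]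

theorem admissiblePoids_zero_concat_true (l : List Bool) :
    admissiblePoids c₁ c₂ c₃ 0 (l ++ [true]) = 0 :=
  if_neg (not_admissibleEndingAt_concat_true_zero l)

theorem admissiblePoids_succ_concat_true (i : ℕ) (l : List Bool) :
    admissiblePoids c₁ c₂ c₃ (i + 1) (l ++ [true]) = c₁ * admissiblePoids c₁ c₂ c₃ i l := by
  by_cases h : AdmissibleEndingAt l i
  · simp [admissiblePoids, admissibleEndingAt_concat_true_succ_iff, h, poids_concat]
  · simp [admissiblePoids, admissibleEndingAt_concat_true_succ_iff, h]

theorem admissiblePoids_concat_false (i : ℕ) (l : List Bool) :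
    admissiblePoids c₁ c₂ c₃ i (l ++ [false]) =
      (if i = 0 then c₃ else c₂) * admissiblePoids c₁ c₂ c₃ (i + 1) l := by
  by_cases h : AdmissibleEndingAt l (i + 1)
  · have hheight : heightAfter l l.length = 1 ↔ i = 0 := by
      rw [h.2]
      lia
    simp [admissiblePoids, admissibleEndingAt_concat_false_iff, h, poids_concat, hheight]
  · simp [admissiblePoids, admissibleEndingAt_concat_false_iff, h]

/-- The weighted count of the admissible paths of length `n` ending at `i`. -/
noncomputable def weightedPathCount (i n : ℕ) : R :=
  ∑ p : Fin n → Bool, admissiblePoids c₁ c₂ c₃ i (List.ofFn p)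

theorem weightedPathCount_length_zero (i : ℕ) :
    weightedPathCount c₁ c₂ c₃ i 0 = if i = 0 then 1 else 0 := by
  simp [weightedPathCount, admissiblePoids_nil]

theorem weightedPathCount_zero_succ (n : ℕ) :
    weightedPathCount c₁ c₂ c₃ 0 (n + 1) = c₃ * weightedPathCount c₁ c₂ c₃ 1 n := by
  simp only [weightedPathCount, sum_ofFn_succ (f := admissiblePoids c₁ c₂ c₃ 0),
    Fintype.sum_bool, admissiblePoids_zero_concat_true, admissiblePoids_concat_false,
    if_true, Finset.mul_sum, Finset.sum_const_zero, zero_add]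

theorem weightedPathCount_succ_succ (i n : ℕ) :
    weightedPathCount c₁ c₂ c₃ (i + 1) (n + 1) =
      c₁ * weightedPathCount c₁ c₂ c₃ i n + c₂ * weightedPathCount c₁ c₂ c₃ (i + 2) n := by
  simp only [weightedPathCount, sum_ofFn_succ (f := admissiblePoids c₁ c₂ c₃ (i + 1)),
    Fintype.sum_bool, admissiblePoids_succ_concat_true, admissiblePoids_concat_false,
    i.succ_ne_zero, if_false, Finset.mul_sum]

end Weight

open scoped Classical in
theorem generic_recurrence_counts_weighted_dyck_paths
    {R : Type*} [CommRing R] (c₁ c₂ c₃ : R) (A : ℕ → ℕ → R)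
    (hA_init : ∀ i, A i 0 = if i = 0 then 1 else 0)
    (hA_zero : ∀ n, A 0 (n + 1) = c₃ * A 1 n)
    (hA_succ : ∀ i n, A (i + 1) (n + 1) = c₁ * A i n + c₂ * A (i + 2) n)
    (i n : ℕ) :
    A i n = ∑ p : Fin n → Bool,
      if AdmissibleEndingAt (List.ofFn p) i then poids c₁ c₂ c₃ (List.ofFn p) else 0 := by
  change A i n = weightedPathCount c₁ c₂ c₃ i n
  induction n generalizing i with
  | zero => rw [hA_init, weightedPathCount_length_zero]
  | succ n ih =>
    cases i with
    | zero => rw [hA_zero, ih, weightedPathCount_zero_succ]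
    | succ i => rw [hA_succ, ih, ih, weightedPathCount_succ_succ]
end
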